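/- Let 𝛂 = (α_1, …, α_n) be a tuple of quaternions, let A = 𝒥_𝛂 ∈ ℍ^{n×n} be the lower bidiagonal matrix with diagonal α_1, …, α_n and ones on the first subdiagonal, and let B ∈ ℍ^{m×m} be such that 𝒳_{[α_k]}(B) := B² − (α_k + ᾱ_k)B + |α_k|² I_m is invertible for k = 1, …, n. Let C ∈ ℍ^{n×m} have rows C̃_1, …, C̃_n. Then the equation AX − XB = C has a unique solution X ∈ ℍ^{n×m}, whose k‑th row is X̃_k = − Σ_{j=1}^{k} (ρ_{ᾱ_k} ρ_{ᾱ_{k−1}} ⋯ ρ_{ᾱ_j} C̃_j)^{e_r}(B) · (𝒳_{[α_j]}(B))⁻¹ (𝒳_{[α_{j+1}]}(B))⁻¹ ⋯ (𝒳_{[α_k]}(B))⁻¹, where the product of inverses is taken left to right in increasing order of the index i from j to k. -/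

import Mathlib

open Quaternion Matrix Polynomial

/-- The polynomial `ρ_{g k} ρ_{g (k−1)} ⋯ ρ_{g j}` (leftmost factor has index `k`),
where `ρ_a(z) = z − a`. -/
noncomputable def rhoProd (g : ℕ → ℍ[ℝ]) (j k : ℕ) : Polynomial ℍ[ℝ] :=
  (((List.range (k + 1 - j)).map fun t => Polynomial.X - Polynomial.C (g (k - t))).prod)

/-- Right evaluation of the row-vector polynomial `P·D` at `B`:
`(P·D)^{e_r}(B) = Σ_t (P.coeff t) D B^t`. -/
noncomputable def rEvalRow {m : ℕ} (P : Polynomial ℍ[ℝ]) (D : Matrix (Fin 1) (Fin m) ℍ[ℝ])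
    (B : Matrix (Fin m) (Fin m) ℍ[ℝ]) : Matrix (Fin 1) (Fin m) ℍ[ℝ] :=
  ∑ t ∈ Finset.range (P.natDegree + 1), P.coeff t • (D * B ^ t)

/-! Write `T_g y = y B - g y`. Row `k` of `A X - X B = C` reads `T_{α_k} X̃_k = X̃_{k-1} - C̃_k`.
Since `α + ᾱ` and `α ᾱ` are central, `T_ᾱ` and `T_α` compose, in either order, to right
multiplication by `𝒳_{[α]}(B)`, so the row equation is equivalent to the recursion
`X̃_k = T_{ᾱ_k} (X̃_{k-1} - C̃_k) 𝒳_{[α_k]}(B)⁻¹`. Multiplying a polynomial by `ρ_g` on the left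
applies `T_g` to its right evaluation, and `T_g` commutes with right multiplication by anything
that commutes with `B`; unfolding the recursion therefore yields the closed formula. -/

namespace SylvesterBidiagonal

theorem forall_lt_succ_eq_iff {α : Type*} {f : ℕ → α → α} {x y : ℕ → α} (hzero : x 0 = y 0)
    (hy : ∀ k, y (k + 1) = f k (y k)) (n : ℕ) :
    (∀ k < n, x (k + 1) = f k (x k)) ↔ ∀ k ≤ n, x k = y k := by
  constructor
  · intro hx k
    induction k with
    | zero => exact fun _ => hzero
    | succ k ih => exact fun hk => by rw [hx k hk, hy, ih (Nat.le_of_lt hk)]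
  · intro h k hk
    rw [h (k + 1) hk, h k hk.le, hy]

theorem sum_fin_ite_le {M : Type*} [AddCommMonoid M] {n : ℕ} (f : ℕ → M) (k : Fin n) :
    (∑ j : Fin n, if (j : ℕ) ≤ k then f j else 0) = ∑ j ∈ Finset.range (k + 1), f j := by
  rw [Fin.sum_univ_eq_sum_range (fun j => if j ≤ (k : ℕ) then f j else 0) n, ← Finset.sum_filter]
  congr 1
  ext j
  simp only [Finset.mem_filter, Finset.mem_range]
  omega

section Monoid

variable {M : Type*} [Monoid M]

theorem commute_of_inverse {x w b : M} (hw : x * w = 1 ∧ w * x = 1)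
    (h : Commute x b) : Commute w b :=
  Commute.units_inv_left (u := ⟨x, w, hw.1, hw.2⟩) h

/-- The product `W j * W (j + 1) * ⋯ * W k` in a noncommutative monoid; it is `1` when `k < j`. -/
def ascendingProd (W : ℕ → M) (j k : ℕ) : M :=
  ((List.range (k + 1 - j)).map fun t => W (j + t)).prod

theorem ascendingProd_self (W : ℕ → M) (k : ℕ) : ascendingProd W k k = W k := by
  simp [ascendingProd]

theorem ascendingProd_succ (W : ℕ → M) {j k : ℕ} (hjk : j ≤ k) :
    ascendingProd W j (k + 1) = ascendingProd W j k * W (k + 1) := by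
  have hlen : k + 1 + 1 - j = (k + 1 - j) + 1 := by omega
  have hlast : j + (k + 1 - j) = k + 1 := by omega
  rw [ascendingProd, hlen, List.prod_range_succ, hlast, ascendingProd]

theorem commute_ascendingProd {W : ℕ → M} {b : M} {k : ℕ} (hW : ∀ i ≤ k, Commute (W i) b)
    (j : ℕ) : Commute (ascendingProd W j k) b := by
  refine Commute.list_prod_left _ _ fun w hw => ?_
  obtain ⟨t, ht, rfl⟩ := List.mem_map.1 hw
  rw [List.mem_range] at ht
  exact hW _ (by omega)

end Monoid

theorem mul_scalar_eq_smul {R ι κ : Type*} [Semiring R] [Fintype κ] [DecidableEq κ] {s : R}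
    (hs : ∀ r, Commute s r) (y : Matrix ι κ R) :
    y * Matrix.scalar κ s = s • y := by
  ext i j
  rw [scalar_apply, mul_diagonal, Matrix.smul_apply, smul_eq_mul, (hs (y i j)).eq]

section Ring

variable {R ι κ : Type*} [Ring R] [Fintype κ]

/-- The Sylvester operator `y ↦ y B - g y` of the scalar `g` and the matrix `B`, as a map of
additive groups: for noncommutative `R` it is not `R`-linear. -/
def sylvesterHom (B : Matrix κ κ R) (g : R) : Matrix ι κ R →+ Matrix ι κ R :=
  AddMonoidHom.mk' (fun y => y * B - g • y) fun y z => by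
    rw [Matrix.add_mul, smul_add, add_sub_add_comm]

theorem sylvesterHom_apply (B : Matrix κ κ R) (g : R) (y : Matrix ι κ R) :
    sylvesterHom B g y = y * B - g • y :=
  rfl

theorem sylvesterHom_mul {B M : Matrix κ κ R} (h : Commute M B) (g : R) (y : Matrix ι κ R) :
    sylvesterHom B g (y * M) = sylvesterHom B g y * M := by
  simp only [sylvesterHom_apply, Matrix.sub_mul, Matrix.smul_mul, Matrix.mul_assoc, h.eq]

/-- The elements `p` and `q` have central sum and product, as a quaternion and its conjugate do. -/
structure IsCentralPair (p q : R) : Prop where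
  commute_add : ∀ r, Commute (p + q) r
  commute_mul : ∀ r, Commute (p * q) r

namespace IsCentralPair

variable {p q : R}

theorem commute (h : IsCentralPair p q) : Commute p q := by
  simpa using (h.commute_add q).sub_left (Commute.refl q)

theorem symm (h : IsCentralPair p q) : IsCentralPair q p where
  commute_add := by simpa only [add_comm] using h.commute_add
  commute_mul := by simpa only [h.commute.eq] using h.commute_mul

end IsCentralPair

variable [DecidableEq κ]

/-- The value at `B` of the quadratic polynomial `z² - (p + q) z + p q`; for `q = p̄` it is
`𝒳_{[p]}(B)`. -/
def quadraticEval (p q : R) (B : Matrix κ κ R) : Matrix κ κ R :=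
  B * B - Matrix.scalar κ (p + q) * B + Matrix.scalar κ (p * q)

theorem quadraticEval_comm {p q : R} (h : IsCentralPair p q) (B : Matrix κ κ R) :
    quadraticEval q p B = quadraticEval p q B := by
  rw [quadraticEval, quadraticEval, add_comm q p, h.commute.eq]

theorem commute_quadraticEval {p q : R} (h : IsCentralPair p q) (B : Matrix κ κ R) :
    Commute (quadraticEval p q B) B :=
  (((Commute.refl B).mul_left (Commute.refl B)).sub_left
    ((scalar_commute _ h.commute_add B).mul_left (Commute.refl B))).add_left
      (scalar_commute _ h.commute_mul B)

theorem sylvesterHom_sylvesterHom {p q : R} (h : IsCentralPair p q) (B : Matrix κ κ R)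
    (y : Matrix ι κ R) :
    sylvesterHom B p (sylvesterHom B q y) = y * quadraticEval p q B := by
  rw [quadraticEval, Matrix.mul_add, Matrix.mul_sub, ← Matrix.mul_assoc, ← Matrix.mul_assoc,
    mul_scalar_eq_smul h.commute_add, mul_scalar_eq_smul h.commute_mul]
  simp only [sylvesterHom_apply, Matrix.sub_mul, Matrix.smul_mul, Matrix.add_mul, smul_sub,
    smul_smul, add_smul]
  abel

theorem sylvesterHom_eq_iff {p q : R} (h : IsCentralPair p q) {B W : Matrix κ κ R}
    (hW : quadraticEval p q B * W = 1 ∧ W * quadraticEval p q B = 1) {x d : Matrix ι κ R} :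
    sylvesterHom B p x = d ↔ x = sylvesterHom B q d * W := by
  constructor
  · rintro rfl
    rw [sylvesterHom_sylvesterHom h.symm, quadraticEval_comm h, Matrix.mul_assoc, hW.1,
      Matrix.mul_one]
  · rintro rfl
    rw [sylvesterHom_mul (commute_of_inverse hW (commute_quadraticEval h B)),
      sylvesterHom_sylvesterHom h, Matrix.mul_assoc, hW.1, Matrix.mul_one]

end Ring

section Bidiagonal

variable {R κ : Type*} {n : ℕ}

/-- The matrix `𝒥_a`: diagonal `a 0, …, a (n - 1)` and ones on the first subdiagonal. -/
def lowerBidiagonal [Zero R] [One R] (n : ℕ) (a : ℕ → R) : Matrix (Fin n) (Fin n) R :=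
  Matrix.of fun i j =>
    if (i : ℕ) = (j : ℕ) then a (i : ℕ) else if (i : ℕ) = (j : ℕ) + 1 then 1 else 0

section Padding

variable [Zero R]

/-- The rows of `X` as `1 × κ` matrices, shifted by one and padded with zeros: `X k` sits at index
`k + 1`, so that index `k` is the row preceding `X k`, and is zero for `k = 0`. -/
def paddedRow (X : Matrix (Fin n) κ R) : ℕ → Matrix (Fin 1) κ R
  | 0 => 0
  | k + 1 => if h : k < n then replicateRow (Fin 1) (X.row ⟨k, h⟩) else 0

theorem paddedRow_succ (X : Matrix (Fin n) κ R) (k : Fin n) :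
    paddedRow X (k + 1) = replicateRow (Fin 1) (X.row k) :=
  dif_pos k.isLt

theorem forall_paddedRow_eq_iff {x : ℕ → Matrix (Fin 1) κ R} (hx : x 0 = 0)
    {X : Matrix (Fin n) κ R} :
    (∀ k ≤ n, paddedRow X k = x k) ↔ X = Matrix.of fun k : Fin n => x (k + 1) 0 := by
  constructor
  · intro h
    ext k l
    rw [Matrix.of_apply, ← h (k + 1) k.isLt, paddedRow_succ, replicateRow_apply, row_apply]
  · rintro rfl (_ | k) hk
    · exact hx.symm
    · rw [paddedRow_succ _ ⟨k, hk⟩]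
      ext i l
      rw [Subsingleton.elim i 0]
      rfl

end Padding

theorem replicateRow_sum_subdiagonal [AddCommMonoid R] (X : Matrix (Fin n) κ R)
    (k : Fin n) :
    replicateRow (Fin 1) (∑ j : Fin n, if (k : ℕ) = j + 1 then X.row j else 0) =
      paddedRow X k := by
  obtain ⟨_ | k, hk⟩ := k
  · simp [paddedRow]
  · have hlt : k < n := Nat.lt_of_succ_lt hk
    have hiff (j : Fin n) : k + 1 = (j : ℕ) + 1 ↔ (⟨k, hlt⟩ : Fin n) = j := by
      rw [Nat.add_right_cancel_iff, Fin.ext_iff]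
    simp only [hiff, Finset.sum_ite_eq, Finset.mem_univ, if_true]
    exact (paddedRow_succ X ⟨k, hlt⟩).symm

theorem replicateRow_lowerBidiagonal_mul [Semiring R] (a : ℕ → R) (X : Matrix (Fin n) κ R)
    (k : Fin n) :
    replicateRow (Fin 1) ((lowerBidiagonal n a * X).row k) =
      a k • paddedRow X (k + 1) + paddedRow X k := by
  have entry (j : Fin n) : lowerBidiagonal n a k j • X.row j =
      (if k = j then a k • X.row j else 0) + if (k : ℕ) = j + 1 then X.row j else 0 := by
    simp only [lowerBidiagonal, Matrix.of_apply, Fin.ext_iff, ite_smul, one_smul, zero_smul]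
    split_ifs <;> first | omega | simp
  have hrow : (lowerBidiagonal n a * X).row k = ∑ j, lowerBidiagonal n a k j • X.row j :=
    vecMul_eq_sum _ _
  simp only [hrow, entry, Finset.sum_add_distrib, Finset.sum_ite_eq, Finset.mem_univ, if_true]
  rw [replicateRow_add, replicateRow_smul, replicateRow_sum_subdiagonal, paddedRow_succ]

variable [Ring R] [Fintype κ]

theorem lowerBidiagonal_sylvester_iff_rows (a : ℕ → R) (B : Matrix κ κ R)
    (X C : Matrix (Fin n) κ R) :
    lowerBidiagonal n a * X - X * B = C ↔
      ∀ k < n, sylvesterHom B (a k) (paddedRow X (k + 1)) =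
        paddedRow X k - paddedRow C (k + 1) := by
  have row_iff (k : Fin n) : (lowerBidiagonal n a * X - X * B).row k = C.row k ↔
      sylvesterHom B (a k) (paddedRow X (k + 1)) = paddedRow X k - paddedRow C (k + 1) := by
    have hmul : replicateRow (Fin 1) ((X * B).row k) = paddedRow X (k + 1) * B := by
      rw [paddedRow_succ, ← replicateRow_vecMul]
      rfl
    have hsub : replicateRow (Fin 1) ((lowerBidiagonal n a * X - X * B).row k) =
        replicateRow (Fin 1) ((lowerBidiagonal n a * X).row k) -
          replicateRow (Fin 1) ((X * B).row k) := rfl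
    rw [← replicateRow_inj (ι := Fin 1), hsub, replicateRow_lowerBidiagonal_mul, hmul,
      ← paddedRow_succ C, sylvesterHom_apply, sub_eq_sub_iff_add_eq_add, sub_eq_iff_eq_add,
      add_comm (a k • _), eq_comm, add_comm (paddedRow C _)]
  refine funext_iff.trans (Fin.forall_iff.trans ?_)
  exact forall₂_congr fun k hk => row_iff ⟨k, hk⟩

/-- The sequence solving the row recursion `x_{k+1} = (x_k - c_k) B W_k - b_k (x_k - c_k) W_k`
with `x_0 = 0`; its indices are shifted as in `paddedRow`. -/
def rowSolution (b : ℕ → R) (B : Matrix κ κ R) (W : ℕ → Matrix κ κ R)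
    (c : ℕ → Matrix (Fin 1) κ R) : ℕ → Matrix (Fin 1) κ R
  | 0 => 0
  | k + 1 => sylvesterHom B (b k) (rowSolution b B W c k - c k) * W k

theorem lowerBidiagonal_sylvester_iff [DecidableEq κ] {a b : ℕ → R} {B : Matrix κ κ R}
    {W : ℕ → Matrix κ κ R} (hab : ∀ k < n, IsCentralPair (a k) (b k))
    (hW : ∀ k < n, quadraticEval (a k) (b k) B * W k = 1 ∧ W k * quadraticEval (a k) (b k) B = 1)
    {X C : Matrix (Fin n) κ R} :
    lowerBidiagonal n a * X - X * B = C ↔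
      X = Matrix.of fun k : Fin n =>
        rowSolution b B W (fun i => paddedRow C (i + 1)) (k + 1) 0 := by
  rw [lowerBidiagonal_sylvester_iff_rows, ← forall_paddedRow_eq_iff rfl]
  refine (forall₂_congr fun k hk => sylvesterHom_eq_iff (hab k hk) (hW k hk)).trans ?_
  refine forall_lt_succ_eq_iff
    (f := fun k x => sylvesterHom B (b k) (x - paddedRow C (k + 1)) * W k) ?_ (fun _ => ?_) n
  · rfl
  · rfl

end Bidiagonal

section RightEvaluation

variable {m : ℕ} (g : ℕ → ℍ[ℝ]) (D : Matrix (Fin 1) (Fin m) ℍ[ℝ]) (B : Matrix (Fin m) (Fin m) ℍ[ℝ])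

theorem rhoProd_self (k : ℕ) : rhoProd g k k = Polynomial.X - Polynomial.C (g k) := by
  simp [rhoProd]

theorem rhoProd_succ {j k : ℕ} (hjk : j ≤ k) :
    rhoProd g j (k + 1) = (Polynomial.X - Polynomial.C (g (k + 1))) * rhoProd g j k := by
  have hlen : k + 1 + 1 - j = (k + 1 - j) + 1 := by omega
  simp only [rhoProd, hlen, List.prod_range_succ', Nat.sub_zero, Nat.succ_eq_add_one,
    Nat.add_sub_add_right]

theorem rEvalRow_eq_sum (P : Polynomial ℍ[ℝ]) :
    rEvalRow P D B = P.sum fun t r => r • (D * B ^ t) :=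
  (P.sum_over_range (f := fun t r => r • (D * B ^ t)) fun _ => zero_smul _ _).symm

theorem rEvalRow_monomial (t : ℕ) (r : ℍ[ℝ]) :
    rEvalRow (monomial t r) D B = r • (D * B ^ t) := by
  rw [rEvalRow_eq_sum]
  exact sum_monomial_index r _ (zero_smul _ _)

theorem rEvalRow_add (P Q : Polynomial ℍ[ℝ]) :
    rEvalRow (P + Q) D B = rEvalRow P D B + rEvalRow Q D B := by
  simp only [rEvalRow_eq_sum]
  exact sum_add_index _ _ _ (fun _ => zero_smul _ _) fun _ _ _ => add_smul _ _ _

theorem rEvalRow_X_sub_C_mul (r : ℍ[ℝ]) (P : Polynomial ℍ[ℝ]) :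
    rEvalRow ((Polynomial.X - Polynomial.C r) * P) D B = sylvesterHom B r (rEvalRow P D B) := by
  induction P using Polynomial.induction_on' with
  | add P Q hP hQ => rw [mul_add, rEvalRow_add, hP, hQ, rEvalRow_add, map_add]
  | monomial t s =>
    have hmul : (Polynomial.X - Polynomial.C r) * monomial t s =
        monomial (t + 1) s + monomial t (-(r * s)) := by
      rw [sub_mul, X_mul_monomial, C_mul_monomial, map_neg, sub_eq_add_neg]
    rw [hmul, rEvalRow_add, rEvalRow_monomial, rEvalRow_monomial, rEvalRow_monomial,
      sylvesterHom_apply, neg_smul, ← sub_eq_add_neg, mul_smul, Matrix.smul_mul,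
      Matrix.mul_assoc, pow_succ]

theorem rEvalRow_rhoProd_self (k : ℕ) :
    rEvalRow (rhoProd g k k) D B = sylvesterHom B (g k) D := by
  have hone : rEvalRow 1 D B = D := by
    rw [← monomial_zero_one, rEvalRow_monomial, one_smul, pow_zero, Matrix.mul_one]
  rw [rhoProd_self, ← mul_one (Polynomial.X - _), rEvalRow_X_sub_C_mul, hone]

theorem rEvalRow_rhoProd_succ {j k : ℕ} (hjk : j ≤ k) :
    rEvalRow (rhoProd g j (k + 1)) D B =
      sylvesterHom B (g (k + 1)) (rEvalRow (rhoProd g j k) D B) := by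
  rw [rhoProd_succ g hjk, rEvalRow_X_sub_C_mul]

end RightEvaluation

section Quaternion

variable {m : ℕ}

theorem isCentralPair_star (q : ℍ[ℝ]) : IsCentralPair q (star q) where
  commute_add r := by
    rw [Quaternion.self_add_star']
    exact Quaternion.coe_commute _ r
  commute_mul r := by
    rw [Quaternion.self_mul_star]
    exact Quaternion.coe_commute _ r

theorem rowSolution_succ_eq_sum (b : ℕ → ℍ[ℝ]) {B : Matrix (Fin m) (Fin m) ℍ[ℝ]}
    {W : ℕ → Matrix (Fin m) (Fin m) ℍ[ℝ]} (c : ℕ → Matrix (Fin 1) (Fin m) ℍ[ℝ]) {k : ℕ}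
    (hW : ∀ i < k, Commute (W i) B) :
    rowSolution b B W c (k + 1) =
      -∑ j ∈ Finset.range (k + 1), rEvalRow (rhoProd b j k) (c j) B * ascendingProd W j k := by
  induction k with
  | zero =>
    simp only [rowSolution, zero_sub, map_neg, Matrix.neg_mul, zero_add, Finset.sum_range_one,
      rEvalRow_rhoProd_self, ascendingProd_self]
  | succ k ih =>
    have hterm : ∀ j ∈ Finset.range (k + 1),
        rEvalRow (rhoProd b j (k + 1)) (c j) B * ascendingProd W j (k + 1) =
          sylvesterHom B (b (k + 1)) (rEvalRow (rhoProd b j k) (c j) B * ascendingProd W j k) *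
            W (k + 1) := by
      intro j hj
      have hjk : j ≤ k := Finset.mem_range_succ_iff.1 hj
      rw [rEvalRow_rhoProd_succ b _ B hjk, ascendingProd_succ W hjk, ← Matrix.mul_assoc,
        sylvesterHom_mul (commute_ascendingProd (fun i hi => hW i (Nat.lt_succ_of_le hi)) j)]
    rw [rowSolution, ih fun i hi => hW i (Nat.lt_succ_of_lt hi), Finset.sum_range_succ _ (k + 1),
      Finset.sum_congr rfl hterm, rEvalRow_rhoProd_self, ascendingProd_self, ← Matrix.sum_mul,
      ← map_sum, ← Matrix.add_mul, ← map_add, ← Matrix.neg_mul, ← map_neg, neg_add, sub_eq_add_neg]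

end Quaternion

end SylvesterBidiagonal

open SylvesterBidiagonal

/-- Let `A = 𝒥_𝛂` be lower bidiagonal with diagonal `α_1,…,α_n` and ones
on the first subdiagonal, and let `B` be such that each `𝒳_{[α_k]}(B)` is invertible, with
two-sided inverse `W k`.  Then `AX − XB = C` has a unique solution, whose `k`-th row is
`X̃_k = − Σ_{j=1}^{k} (ρ_{ᾱ_k}⋯ρ_{ᾱ_j} C̃_j)^{e_r}(B) · (𝒳_{[α_j]}(B))⁻¹ ⋯ (𝒳_{[α_k]}(B))⁻¹`.
(Indices here are 0-based: `a k` is `α_{k+1}`.) -/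
theorem sylvester_bidiagonal_rows (n m : ℕ) (a : ℕ → ℍ[ℝ])
    (A : Matrix (Fin n) (Fin n) ℍ[ℝ])
    (hA : A = Matrix.of fun (i j : Fin n) =>
      if (i : ℕ) = (j : ℕ) then a (i : ℕ) else if (i : ℕ) = (j : ℕ) + 1 then 1 else 0)
    (B : Matrix (Fin m) (Fin m) ℍ[ℝ])
    (chi : ℕ → Matrix (Fin m) (Fin m) ℍ[ℝ])
    (hchi : ∀ k, chi k = B * B - Matrix.diagonal (fun _ => a k + star (a k)) * B +
      Matrix.diagonal (fun _ => ((Quaternion.normSq (a k) : ℝ) : ℍ[ℝ])))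
    (W : ℕ → Matrix (Fin m) (Fin m) ℍ[ℝ])
    (hW : ∀ k < n, chi k * W k = 1 ∧ W k * chi k = 1)
    (C : Matrix (Fin n) (Fin m) ℍ[ℝ]) :
    (∃! X : Matrix (Fin n) (Fin m) ℍ[ℝ], A * X - X * B = C) ∧
      ∀ X : Matrix (Fin n) (Fin m) ℍ[ℝ], A * X - X * B = C →
        ∀ k : Fin n, (Matrix.of fun (_ : Fin 1) jc => X k jc) =
          -(∑ j : Fin n, if (j : ℕ) ≤ (k : ℕ) then
              rEvalRow (rhoProd (fun t => star (a t)) j k)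
                  (Matrix.of fun (_ : Fin 1) jc => C j jc) B *
                ((List.range ((k : ℕ) + 1 - (j : ℕ))).map fun t => W ((j : ℕ) + t)).prod
            else 0) := by
  have hinv : ∀ k < n, quadraticEval (a k) (star (a k)) B * W k = 1 ∧
      W k * quadraticEval (a k) (star (a k)) B = 1 := fun k hk => by
    simpa only [quadraticEval, scalar_apply, Quaternion.self_mul_star, ← hchi] using hW k hk
  have hcomm : ∀ k < n, Commute (W k) B := fun k hk =>
    commute_of_inverse (hinv k hk) (commute_quadraticEval (isCentralPair_star (a k)) B)
  obtain rfl : A = lowerBidiagonal n a := hA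
  have hsol (X : Matrix (Fin n) (Fin m) ℍ[ℝ]) := lowerBidiagonal_sylvester_iff (X := X) (C := C)
    (fun k _ => isCentralPair_star (a k)) hinv
  refine ⟨⟨_, (hsol _).2 rfl, fun X => (hsol X).1⟩, fun X hX k => ?_⟩
  have hrow := forall_paddedRow_eq_iff rfl |>.2 ((hsol X).1 hX) (k + 1) k.isLt
  rw [paddedRow_succ, rowSolution_succ_eq_sum _ _ fun i hi => hcomm i (hi.trans k.isLt),
    ← sum_fin_ite_le] at hrow
  simpa only [paddedRow_succ] using! hrow
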